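/- For every integer N ≥ 1 and every ε ∈ (0, π), there exist constants C > 0 and R > 0 such that for all z ∈ ℂ with |z| ≥ R and |arg(z)| ≤ π − ε, | ψ₁(z) − (1/2)log²(z) + log(z)/(2z) − Σ_{k=1}^{N} (B_{2k}/(2k z^{2k})) ( Σ_{j=1}^{2k−2} 1/j + 1/(2k−1) − log(z) ) | ≤ C |z|^{−2N−2} (1 + log|z|). (This is the asymptotic expansion ψ₁(z) ∼ (1/2)log²(z) − log(z)/(2z) + Σ_{k=1}^∞ (B_{2k}/(2k z^{2k}))(Σ_{j=1}^{2k−2} 1/j + 1/(2k−1) − log(z)) as z → ∞ in |arg(z)| < π.) -/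

import Mathlib

open Filter Topology MeasureTheory

noncomputable def eulerGamma : ℝ := Real.eulerMascheroniConstant

noncomputable def gamma1 : ℝ :=
  limUnder atTop (fun n : ℕ => ∑ j ∈ Finset.Icc 1 n, Real.log j / j - (Real.log n) ^ 2 / 2)

noncomputable def psi1 (z : ℂ) : ℂ :=
  -(gamma1 : ℂ) - Complex.log z / z -
    ∑' n : ℕ, (Complex.log (((n : ℂ) + 1) + z) / (((n : ℂ) + 1) + z)
      - Complex.log ((n : ℂ) + 1) / ((n : ℂ) + 1))

/-!
`psi1` solves the difference equation `S (z + 1) - S z = log z / z`. The Euler–Maclaurin sums of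
`log² z / 2`, with Bernoulli weights `B_m / m!`, solve it up to a defect that is bounded by the
first omitted derivative, hence is `O(|z|⁻ʳ)` in a sector `|arg z| ≤ θ < π`. As `n → ∞` both
`psi1 (z + n)` and the sums at `z + n` agree with `log² n / 2` up to `o(1)`; so the error at `z` is
the sum of the defects along `z, z + 1, z + 2, …`, and `|z + t| ≥ cos(θ/2) (|z| + t)` makes the
resulting estimate uniform in the sector.
-/

open Asymptotics Bornology
open scoped Nat Real

section EulerMaclaurin

lemma hasDerivAt_bernoulliFun_succ_div_factorial (m : ℕ) (t : ℝ) :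
    HasDerivAt (fun t ↦ bernoulliFun (m + 1) t / (m + 1)!) (bernoulliFun m t / m !) t := by
  convert! (hasDerivAt_bernoulliFun (m + 1) t).div_const ((m + 1)! : ℝ) using 1
  rw [Nat.factorial_succ]
  push_cast
  field_simp

section Module

variable {E : Type*} [AddCommGroup E] [Module ℝ E]

/-- The Euler–Maclaurin sum `∑_{m ≤ M} (B_m / m!) a_m`. For `a_m = F⁽ᵐ⁾(z)` it is the `M`-th
approximation to a solution `S` of the difference equation `S (z + 1) - S z = F⁽¹⁾(z)`. -/
noncomputable def eulerMaclaurinSum (M : ℕ) (a : ℕ → E) : E :=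
  ∑ m ∈ Finset.range (M + 1), ((bernoulli m : ℝ) / m !) • a m

/-- The function of `t ∈ [0, 1]` that interpolates between the Euler–Maclaurin sums at both ends,
up to the term `f 1 0`. -/
noncomputable def eulerMaclaurinInterp (M : ℕ) (f : ℕ → ℝ → E) (t : ℝ) : E :=
  ∑ m ∈ Finset.range (M + 1), (bernoulliFun m (1 - t) / m !) • f m t

lemma eulerMaclaurinSum_succ (M : ℕ) (a : ℕ → E) :
    eulerMaclaurinSum (M + 1) a =
      eulerMaclaurinSum M a + ((bernoulli (M + 1) : ℝ) / (M + 1)!) • a (M + 1) :=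
  Finset.sum_range_succ _ _

lemma eulerMaclaurinInterp_one (M : ℕ) (f : ℕ → ℝ → E) :
    eulerMaclaurinInterp M f 1 = eulerMaclaurinSum M (f · 1) := by
  simp [eulerMaclaurinInterp, eulerMaclaurinSum, bernoulliFun_eval_zero]

lemma eulerMaclaurinInterp_zero {M : ℕ} (hM : M ≠ 0) (f : ℕ → ℝ → E) :
    eulerMaclaurinInterp M f 0 = eulerMaclaurinSum M (f · 0) + f 1 0 := by
  have hterm (m : ℕ) : (bernoulliFun m (1 - 0) / m !) • f m 0 =
      ((bernoulli m : ℝ) / m !) • f m 0 + if m = 1 then f 1 0 else 0 := by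
    rw [sub_zero, bernoulliFun_eval_one, bernoulliFun_eval_zero]
    split_ifs with hm
    · simp [hm, add_smul]
    · simp
  have hmem : 1 ∈ Finset.range (M + 1) := by simp; omega
  simp only [eulerMaclaurinInterp, eulerMaclaurinSum, hterm, Finset.sum_add_distrib,
    Finset.sum_ite_eq', if_pos hmem]

end Module

section NormedSpace

variable {E : Type*} [NormedAddCommGroup E] [NormedSpace ℝ E]

-- The sum telescopes: `d/dt B_{m+1} = (m + 1) B_m` cancels everything but the last derivative.
lemma hasDerivWithinAt_eulerMaclaurinInterp {f : ℕ → ℝ → E} {s : Set ℝ} {t : ℝ}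
    (hf : ∀ m, HasDerivWithinAt (f m) (f (m + 1) t) s t) (M : ℕ) :
    HasDerivWithinAt (eulerMaclaurinInterp M f)
      ((bernoulliFun M (1 - t) / M !) • f (M + 1) t) s t := by
  induction M with
  | zero =>
    have hzero : eulerMaclaurinInterp 0 f = f 0 := by ext t; simp [eulerMaclaurinInterp]
    simpa [hzero] using hf 0
  | succ M ih =>
    have hB : HasDerivWithinAt (fun t ↦ bernoulliFun (M + 1) (1 - t) / (M + 1)!)
        (-(bernoulliFun M (1 - t) / M !)) s t := by
      simpa using! ((hasDerivAt_bernoulliFun_succ_div_factorial M (1 - t)).comp t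
        ((hasDerivAt_id t).const_sub 1)).hasDerivWithinAt
    have hsucc : eulerMaclaurinInterp (M + 1) f = fun t ↦ eulerMaclaurinInterp M f t +
        (bernoulliFun (M + 1) (1 - t) / (M + 1)!) • f (M + 1) t :=
      funext fun t ↦ Finset.sum_range_succ _ _
    rw [hsucc]
    convert! ih.add (hB.smul (hf (M + 1))) using 1
    module

lemma norm_eulerMaclaurinSum_sub_le {M : ℕ} (hM : M ≠ 0) {f : ℕ → ℝ → E} {B C : ℝ}
    (hf : ∀ m, ∀ t ∈ Set.Icc (0 : ℝ) 1, HasDerivWithinAt (f m) (f (m + 1) t) (Set.Icc 0 1) t)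
    (hB : ∀ t ∈ Set.Icc (0 : ℝ) 1, |bernoulliFun M t / (M !)| ≤ B)
    (hC : ∀ t ∈ Set.Icc (0 : ℝ) 1, ‖f (M + 1) t‖ ≤ C) :
    ‖eulerMaclaurinSum M (f · 1) - eulerMaclaurinSum M (f · 0) - f 1 0‖ ≤ B * C := by
  have hB0 : 0 ≤ B := (abs_nonneg _).trans (hB 0 (by simp))
  have hbound : ∀ t ∈ Set.Ico (0 : ℝ) 1,
      ‖(bernoulliFun M (1 - t) / M !) • f (M + 1) t‖ ≤ B * C := fun t ht ↦ by
    rw [norm_smul, Real.norm_eq_abs]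
    gcongr
    · exact hB _ ⟨by linarith [ht.2], by linarith [ht.1]⟩
    · exact hC t (Set.Ico_subset_Icc_self ht)
  have hmvt := norm_image_sub_le_of_norm_deriv_le_segment_01'
    (fun t ht ↦ hasDerivWithinAt_eulerMaclaurinInterp (hf · t ht) M) hbound
  rwa [eulerMaclaurinInterp_one, eulerMaclaurinInterp_zero hM, ← sub_sub] at hmvt

end NormedSpace

end EulerMaclaurin

lemma sum_rpow_neg_le {x r : ℝ} (hx : 1 ≤ x) (hr : 1 < r) (n : ℕ) :
    ∑ j ∈ Finset.range n, (x + j) ^ (-r) ≤ r / (r - 1) * x ^ (1 - r) := by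
  have hx0 : 0 < x := by linarith
  have hanti : AntitoneOn (fun y : ℝ ↦ y ^ (-r)) (Set.Icc x (x + n)) := fun y hy _ _ hyz ↦
    Real.rpow_le_rpow_of_nonpos (hx0.trans_le hy.1) hyz (by linarith)
  have hint : ∫ y in x..x + n, y ^ (-r) ≤ x ^ (1 - r) / (r - 1) := by
    have hne : (0 : ℝ) ∉ Set.uIcc x (x + n) := by
      rw [Set.uIcc_of_le (by linarith)]
      exact fun h ↦ hx0.not_ge h.1
    have hpos : 0 ≤ (x + n) ^ (1 - r) := by positivity
    rw [integral_rpow (.inr ⟨by linarith, hne⟩), neg_add_eq_sub, ← neg_div_neg_eq, neg_sub, neg_sub]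
    gcongr
    linarith
  have hfirst : x ^ (-r) ≤ x ^ (1 - r) := Real.rpow_le_rpow_of_exponent_le hx (by linarith)
  calc ∑ j ∈ Finset.range n, (x + j) ^ (-r)
      ≤ ∑ j ∈ Finset.range (n + 1), (x + j) ^ (-r) :=
        Finset.sum_le_sum_of_subset_of_nonneg (by simp) fun _ _ _ ↦ by positivity
    _ = ∑ j ∈ Finset.range n, (x + ↑(j + 1)) ^ (-r) + x ^ (-r) := by
        simp [Finset.sum_range_succ']
    _ ≤ x ^ (1 - r) / (r - 1) + x ^ (1 - r) :=
        add_le_add (hanti.sum_le_integral.trans hint) hfirst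
    _ = r / (r - 1) * x ^ (1 - r) := by
        have : r - 1 ≠ 0 := by linarith
        field_simp
        ring

section Sector

variable {θ : ℝ}

/-- The filter of neighbourhoods of `∞` in the closed sector `|arg z| ≤ θ`, along which the
asymptotic expansion holds. -/
noncomputable def argSectorAtInfty (θ : ℝ) : Filter ℂ := cobounded ℂ ⊓ 𝓟 {z | |z.arg| ≤ θ}

lemma hasBasis_argSectorAtInfty (θ : ℝ) :
    (argSectorAtInfty θ).HasBasis (fun _ : ℝ ↦ True) fun R ↦ {z | R ≤ ‖z‖ ∧ |z.arg| ≤ θ} :=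
  hasBasis_cobounded_norm.inf_principal _

lemma eventually_le_norm_argSectorAtInfty (R : ℝ) : ∀ᶠ z in argSectorAtInfty θ, R ≤ ‖z‖ :=
  (hasBasis_argSectorAtInfty θ).eventually_iff.mpr ⟨R, trivial, fun _ hz ↦ hz.1⟩

lemma eventually_abs_arg_le_argSectorAtInfty :
    ∀ᶠ z in argSectorAtInfty θ, |z.arg| ≤ θ :=
  (eventually_principal.mpr fun _ ↦ id).filter_mono inf_le_right

lemma tendsto_natCast_add_one_argSectorAtInfty :
    Tendsto (fun n : ℕ ↦ (1 : ℂ) + n) atTop (argSectorAtInfty 0) := by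
  refine tendsto_inf.mpr ⟨(tendsto_const_add_cobounded 1).comp tendsto_natCast_atTop_cobounded,
    tendsto_principal.mpr (.of_forall fun n ↦ ?_)⟩
  have harg : ((1 : ℂ) + n).arg = 0 := mod_cast Complex.natCast_arg (n := 1 + n)
  simp [harg]

lemma mem_slitPlane_of_abs_arg_le (hθ : θ < π) {z : ℂ} (hz0 : z ≠ 0) (hz : |z.arg| ≤ θ) :
    z ∈ Complex.slitPlane :=
  Complex.mem_slitPlane_iff_arg.mpr ⟨((le_abs_self _).trans hz |>.trans_lt hθ).ne, hz0⟩

-- Project `z + t` onto the bisector of the angle between `z` and the positive real axis.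
lemma cos_half_mul_le_norm_add_ofReal (hθ : θ ≤ π) {z : ℂ} (hz : |z.arg| ≤ θ) {t : ℝ}
    (ht : 0 ≤ t) : Real.cos (θ / 2) * (‖z‖ + t) ≤ ‖z + t‖ := by
  set α := z.arg with hα
  have hproj : ((z + t) * Complex.exp ((-(α / 2) : ℝ) * Complex.I)).re =
      (‖z‖ + t) * Real.cos (α / 2) := by
    have hz_eq : z * Complex.exp ((-(α / 2) : ℝ) * Complex.I) =
        ‖z‖ * Complex.exp ((α / 2 : ℝ) * Complex.I) := by
      conv_lhs => rw [← Complex.norm_mul_exp_arg_mul_I z, ← hα, mul_assoc, ← Complex.exp_add]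
      push_cast
      ring_nf
    rw [add_mul, hz_eq, Complex.add_re, Complex.re_ofReal_mul, Complex.re_ofReal_mul,
      Complex.exp_ofReal_mul_I_re, Complex.exp_ofReal_mul_I_re, Real.cos_neg, add_mul]
  have hcos : Real.cos (θ / 2) ≤ Real.cos (α / 2) := by
    rw [← Real.cos_abs (α / 2), abs_div, abs_two]
    exact Real.cos_le_cos_of_nonneg_of_le_pi (by positivity) (by linarith [Real.pi_pos])
      (by linarith)
  calc Real.cos (θ / 2) * (‖z‖ + t) ≤ Real.cos (α / 2) * (‖z‖ + t) := by gcongr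
    _ = ((z + t) * Complex.exp ((-(α / 2) : ℝ) * Complex.I)).re := by rw [hproj, mul_comm]
    _ ≤ ‖(z + t) * Complex.exp ((-(α / 2) : ℝ) * Complex.I)‖ := Complex.re_le_norm _
    _ = ‖z + t‖ := by rw [norm_mul, Complex.norm_exp_ofReal_mul_I, mul_one]

lemma abs_arg_add_ofReal_le (z : ℂ) {t : ℝ} (ht : 0 ≤ t) : |(z + t).arg| ≤ |z.arg| := by
  rcases eq_or_ne z 0 with rfl | hz
  · simp [Complex.arg_ofReal_of_nonneg ht]
  rcases eq_or_ne (z + t) 0 with hzt | hzt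
  · simp [hzt]
  have hre := abs_le.mp (Complex.abs_re_le_norm z)
  have hcross : z.re * ‖z + t‖ ≤ (z.re + t) * ‖z‖ := by
    rcases le_total 0 z.re with hre0 | hre0
    · have htri : ‖z + t‖ ≤ ‖z‖ + t := by simpa [abs_of_nonneg ht] using norm_add_le z t
      nlinarith
    · have htri : ‖z‖ ≤ ‖z + t‖ + t := by simpa [abs_of_nonneg ht] using norm_sub_le (z + t) t
      nlinarith
  refine (Real.strictAntiOn_cos.le_iff_ge ⟨abs_nonneg _, Complex.abs_arg_le_pi _⟩
    ⟨abs_nonneg _, Complex.abs_arg_le_pi _⟩).mp ?_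
  rw [Real.cos_abs, Real.cos_abs, Complex.cos_arg hz, Complex.cos_arg hzt, Complex.add_re,
    Complex.ofReal_re]
  exact (div_le_div_iff₀ (norm_pos_iff.mpr hz) (norm_pos_iff.mpr hzt)).mpr hcross

lemma cos_half_pos (hθ0 : 0 ≤ θ) (hθ : θ < π) : 0 < Real.cos (θ / 2) :=
  Real.cos_pos_of_mem_Ioo ⟨by linarith, by linarith⟩

lemma eventually_argSectorAtInfty_forall_add_ofReal (hθ0 : 0 ≤ θ) (hθ : θ < π) {p : ℂ → Prop}
    (hp : ∀ᶠ z in argSectorAtInfty θ, p z) :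
    ∀ᶠ z in argSectorAtInfty θ, ∀ t : ℝ, 0 ≤ t → p (z + t) := by
  obtain ⟨R, -, hR⟩ := (hasBasis_argSectorAtInfty θ).eventually_iff.mp hp
  filter_upwards [eventually_le_norm_argSectorAtInfty (R / Real.cos (θ / 2)),
    eventually_abs_arg_le_argSectorAtInfty] with z hz harg t ht
  refine hR ⟨?_, (abs_arg_add_ofReal_le z ht).trans harg⟩
  calc R ≤ Real.cos (θ / 2) * ‖z‖ := (div_le_iff₀' (cos_half_pos hθ0 hθ)).mp hz
    _ ≤ Real.cos (θ / 2) * (‖z‖ + t) :=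
        mul_le_mul_of_nonneg_left (by linarith) (cos_half_pos hθ0 hθ).le
    _ ≤ ‖z + t‖ := cos_half_mul_le_norm_add_ofReal hθ.le harg ht

lemma exists_eventually_norm_add_ofReal_le {E : Type*} [NormedAddCommGroup E] {g : ℂ → E} {r : ℝ}
    (hθ0 : 0 ≤ θ) (hθ : θ < π) (hr : 0 ≤ r)
    (hg : g =O[argSectorAtInfty θ] fun z ↦ ‖z‖ ^ (-r)) :
    ∃ C > 0, ∀ᶠ z in argSectorAtInfty θ, ∀ t : ℝ, 0 ≤ t → ‖g (z + t)‖ ≤ C * (‖z‖ + t) ^ (-r) := by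
  obtain ⟨K, hK, hgK⟩ := hg.exists_pos
  have hcos := cos_half_pos hθ0 hθ
  refine ⟨K * Real.cos (θ / 2) ^ (-r), by positivity, ?_⟩
  filter_upwards [eventually_argSectorAtInfty_forall_add_ofReal hθ0 hθ hgK.bound,
    eventually_le_norm_argSectorAtInfty 1, eventually_abs_arg_le_argSectorAtInfty]
    with z hz hnorm harg t ht
  calc ‖g (z + t)‖ ≤ K * ‖‖z + t‖ ^ (-r)‖ := hz t ht
    _ = K * ‖z + t‖ ^ (-r) := by rw [Real.norm_of_nonneg (by positivity)]
    _ ≤ K * (Real.cos (θ / 2) * (‖z‖ + t)) ^ (-r) :=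
        mul_le_mul_of_nonneg_left (Real.rpow_le_rpow_of_nonpos (by positivity)
          (cos_half_mul_le_norm_add_ofReal hθ.le harg ht) (by linarith)) hK.le
    _ = K * Real.cos (θ / 2) ^ (-r) * (‖z‖ + t) ^ (-r) := by
        rw [Real.mul_rpow hcos.le (by positivity), mul_assoc]

end Sector

lemma isBigO_one_log_norm : (fun _ : ℂ ↦ (1 : ℝ)) =O[cobounded ℂ] fun z ↦ Real.log ‖z‖ :=
  Real.isLittleO_const_log_atTop.isBigO.comp_tendsto tendsto_norm_cobounded_atTop

lemma isBigO_clog_log_norm : Complex.log =O[cobounded ℂ] fun z ↦ Real.log ‖z‖ := by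
  have hre : (fun z : ℂ ↦ (Real.log ‖z‖ : ℂ)) =O[cobounded ℂ] fun z ↦ Real.log ‖z‖ :=
    .of_norm_left (by simpa using isBigO_refl _ _)
  have him : (fun z : ℂ ↦ (z.arg : ℂ) * Complex.I) =O[cobounded ℂ] fun _ ↦ (1 : ℝ) :=
    .of_bound π (.of_forall fun z ↦ by simpa using Complex.abs_arg_le_pi z)
  exact hre.add (him.trans isBigO_one_log_norm)
    |>.congr_left fun z ↦ by simp [Complex.log]

section HalfLogSqDeriv

/-- The `m`-th derivative of `z ↦ log² z / 2` in closed form. -/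
noncomputable def halfLogSqDeriv : ℕ → ℂ → ℂ
  | 0, z => Complex.log z ^ 2 / 2
  | m + 1, z => (-1) ^ m * m ! * (Complex.log z - harmonic m) / z ^ (m + 1)

lemma halfLogSqDeriv_one (z : ℂ) : halfLogSqDeriv 1 z = Complex.log z / z := by
  simp [halfLogSqDeriv]

lemma hasDerivAt_halfLogSqDeriv (m : ℕ) {z : ℂ} (hz : z ∈ Complex.slitPlane) :
    HasDerivAt (halfLogSqDeriv m) (halfLogSqDeriv (m + 1) z) z := by
  have hz0 : z ≠ 0 := Complex.slitPlane_ne_zero hz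
  have hlog := Complex.hasDerivAt_log hz
  cases m with
  | zero =>
    rw [halfLogSqDeriv_one]
    convert! (hlog.pow 2).div_const 2 using 1
    field_simp
    norm_num [mul_comm]
  | succ m =>
    convert! ((hlog.sub_const (harmonic m : ℂ)).const_mul ((-1) ^ m * (m ! : ℂ))).div
      (hasDerivAt_pow (m + 1) z) (pow_ne_zero _ hz0) using 1
    have hm : (m : ℂ) + 1 ≠ 0 := mod_cast m.succ_ne_zero
    simp only [halfLogSqDeriv, harmonic_succ, Nat.factorial_succ]
    push_cast
    field_simp
    ring

lemma isBigO_halfLogSqDeriv_succ (m : ℕ) :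
    halfLogSqDeriv (m + 1) =O[cobounded ℂ] fun z ↦ Real.log ‖z‖ / ‖z‖ ^ (m + 1) := by
  have hconst : (fun _ : ℂ ↦ (harmonic m : ℂ)) =O[cobounded ℂ] fun z ↦ Real.log ‖z‖ :=
    (isBigO_const_const _ one_ne_zero _).trans isBigO_one_log_norm
  have hpow : (fun z : ℂ ↦ (z ^ (m + 1))⁻¹) =O[cobounded ℂ] fun z ↦ (‖z‖ ^ (m + 1))⁻¹ :=
    .of_norm_left (by simpa using isBigO_refl _ _)
  exact (((isBigO_clog_log_norm.sub hconst).const_mul_left _).mul hpow).congr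
    (fun _ ↦ (div_eq_mul_inv _ _).symm) fun _ ↦ (div_eq_mul_inv _ _).symm

lemma isLittleO_halfLogSqDeriv_succ (m : ℕ) {r : ℝ} (hr : r < m + 1) :
    halfLogSqDeriv (m + 1) =o[cobounded ℂ] fun z ↦ ‖z‖ ^ (-r) := by
  have hlog : (fun x : ℝ ↦ Real.log x / x ^ (m + 1)) =o[atTop] fun x ↦ x ^ (-r) := by
    refine ((isLittleO_log_rpow_atTop (sub_pos.mpr hr)).mul_isBigO
      (isBigO_refl (fun x : ℝ ↦ (x ^ (m + 1))⁻¹) atTop)).congr' (.of_forall fun x ↦ rfl) ?_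
    filter_upwards [eventually_gt_atTop 0] with x hx
    rw [← Real.rpow_natCast, ← Real.rpow_neg hx.le, ← Real.rpow_add hx]
    push_cast
    ring_nf
  exact (isBigO_halfLogSqDeriv_succ m).trans_isLittleO
    (hlog.comp_tendsto tendsto_norm_cobounded_atTop)

lemma tendsto_halfLogSqDeriv_succ (m : ℕ) :
    Tendsto (halfLogSqDeriv (m + 1)) (cobounded ℂ) (𝓝 0) := by
  have := isLittleO_halfLogSqDeriv_succ m (r := 0) (by positivity)
  simpa only [neg_zero, Real.rpow_zero, isLittleO_one_iff] using this

end HalfLogSqDeriv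

lemma isBigO_sub_of_isBigO_hasDerivAt {E : Type*} [NormedAddCommGroup E] [NormedSpace ℂ E]
    {g g' : ℂ → E} {r : ℝ} (hr : 0 ≤ r) (hg : ∀ z ∈ Complex.slitPlane, HasDerivAt g (g' z) z)
    (hg' : g' =O[cobounded ℂ] fun z ↦ ‖z‖ ^ (-r)) (a : ℂ) :
    (fun n : ℕ ↦ g (n + a) - g n) =O[atTop] fun n : ℕ ↦ (n : ℝ) ^ (-r) := by
  obtain ⟨K, hK, hbound⟩ := hg'.exists_pos
  obtain ⟨R, -, hR⟩ := hasBasis_cobounded_norm.eventually_iff.mp hbound.bound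
  refine .of_bound (K * 2 ^ r * ‖a‖) ?_
  filter_upwards [tendsto_natCast_atTop_atTop.eventually_ge_atTop (2 * ‖a‖),
    tendsto_natCast_atTop_atTop.eventually_ge_atTop (2 * R), eventually_gt_atTop 0]
    with n hna hnR hn
  have hn0 : (0 : ℝ) < n := mod_cast hn
  have hball : ∀ w ∈ Metric.closedBall (n : ℂ) ‖a‖, n / 2 ≤ w.re := fun w hw ↦ by
    have := (abs_le.mp ((Complex.abs_re_le_norm _).trans (mem_closedBall_iff_norm.mp hw))).1
    rw [Complex.sub_re, Complex.natCast_re] at this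
    linarith
  have hderiv : ∀ w ∈ Metric.closedBall (n : ℂ) ‖a‖, ‖g' w‖ ≤ K * (n / 2) ^ (-r) := fun w hw ↦ by
    have hw_norm : n / 2 ≤ ‖w‖ := (hball w hw).trans (Complex.re_le_norm w)
    have := hR (show R ≤ ‖w‖ by linarith)
    rw [Real.norm_of_nonneg (by positivity)] at this
    exact this.trans (mul_le_mul_of_nonneg_left
      (Real.rpow_le_rpow_of_nonpos (by positivity) hw_norm (by linarith)) hK.le)
  have hmvt := (convex_closedBall (n : ℂ) ‖a‖).norm_image_sub_le_of_norm_hasDerivWithin_le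
    (fun w hw ↦ (hg w (.inl (by linarith [hball w hw]))).hasDerivWithinAt) hderiv
    (Metric.mem_closedBall_self (norm_nonneg a))
    (show (n : ℂ) + a ∈ Metric.closedBall (n : ℂ) ‖a‖ by simp)
  rw [Real.norm_of_nonneg (by positivity)]
  calc ‖g (n + a) - g n‖ ≤ K * (n / 2) ^ (-r) * ‖n + a - n‖ := hmvt
    _ = K * 2 ^ r * ‖a‖ * n ^ (-r) := by
        rw [add_sub_cancel_left, Real.div_rpow hn0.le two_pos.le, Real.rpow_neg two_pos.le,
          div_inv_eq_mul]
        ring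

section Psi1

/-- The Euler–Maclaurin sum of `log² z / 2`, a partial sum of the asymptotic expansion of `psi1`. -/
noncomputable def psi1Approx (M : ℕ) (z : ℂ) : ℂ :=
  eulerMaclaurinSum M (halfLogSqDeriv · z)

/-- The failure of `psi1Approx M` to satisfy the difference equation
`S (z + 1) - S z = log z / z` of `psi1`. -/
noncomputable def psi1ApproxDefect (M : ℕ) (z : ℂ) : ℂ :=
  psi1Approx M (z + 1) - psi1Approx M z - halfLogSqDeriv 1 z

lemma isBigO_psi1ApproxDefect {M : ℕ} (hM : M ≠ 0) {r θ : ℝ} (hr : 0 ≤ r) (hrM : r < M + 1)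
    (hθ0 : 0 ≤ θ) (hθ : θ < π) :
    psi1ApproxDefect M =O[argSectorAtInfty θ] fun z ↦ ‖z‖ ^ (-r) := by
  obtain ⟨B, hB⟩ := isCompact_Icc.exists_bound_of_continuousOn (s := Set.Icc (0 : ℝ) 1)
    ((continuous_bernoulliFun M).div_const (M ! : ℝ)).continuousOn
  obtain ⟨C, hC, hbound⟩ := exists_eventually_norm_add_ofReal_le hθ0 hθ hr
    ((isLittleO_halfLogSqDeriv_succ M hrM).isBigO.mono inf_le_left)
  have hslit : ∀ᶠ z in argSectorAtInfty θ, z ∈ Complex.slitPlane := by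
    filter_upwards [eventually_le_norm_argSectorAtInfty 1, eventually_abs_arg_le_argSectorAtInfty]
      with z hz harg
    exact mem_slitPlane_of_abs_arg_le hθ (norm_pos_iff.mp (by linarith)) harg
  refine .of_bound (B * C) ?_
  filter_upwards [hbound, eventually_argSectorAtInfty_forall_add_ofReal hθ0 hθ hslit,
    eventually_le_norm_argSectorAtInfty 1] with z hz hzslit hz1
  have hderiv (m : ℕ) (t : ℝ) (ht : t ∈ Set.Icc (0 : ℝ) 1) :
      HasDerivWithinAt (fun t : ℝ ↦ halfLogSqDeriv m (z + t)) (halfLogSqDeriv (m + 1) (z + t))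
        (Set.Icc 0 1) t := by
    simpa using! ((hasDerivAt_halfLogSqDeriv m (hzslit t ht.1)).comp t
      ((Complex.ofRealCLM.hasDerivAt (x := t)).const_add z)).hasDerivWithinAt
  have hlast (t : ℝ) (ht : t ∈ Set.Icc (0 : ℝ) 1) :
      ‖halfLogSqDeriv (M + 1) (z + t)‖ ≤ C * ‖z‖ ^ (-r) :=
    (hz t ht.1).trans (mul_le_mul_of_nonneg_left
      (Real.rpow_le_rpow_of_nonpos (by linarith) (by linarith [ht.1]) (by linarith)) hC.le)
  rw [Real.norm_of_nonneg (by positivity), mul_assoc]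
  simpa [psi1ApproxDefect, psi1Approx] using norm_eulerMaclaurinSum_sub_le hM hderiv hB hlast

lemma sum_psi1ApproxDefect (M : ℕ) (z : ℂ) (n : ℕ) :
    ∑ j ∈ Finset.range n, psi1ApproxDefect M (z + j) =
      psi1Approx M (z + n) - psi1Approx M z - ∑ j ∈ Finset.range n, halfLogSqDeriv 1 (z + j) := by
  have htel := Finset.sum_range_sub (fun j : ℕ ↦ psi1Approx M (z + j)) n
  simp only [Nat.cast_add, Nat.cast_one, Nat.cast_zero, add_zero, ← add_assoc] at htel
  simp only [psi1ApproxDefect]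
  rw [Finset.sum_sub_distrib, htel]

lemma tendsto_psi1Approx_sub (M : ℕ) (a : ℂ) :
    Tendsto (fun n : ℕ ↦ psi1Approx M (a + n) - halfLogSqDeriv 0 n) atTop (𝓝 0) := by
  have hzero : Tendsto (fun n : ℕ ↦ halfLogSqDeriv 0 (n + a) - halfLogSqDeriv 0 n) atTop (𝓝 0) :=
    (isBigO_sub_of_isBigO_hasDerivAt (r := 1 / 2) (by norm_num)
      (fun _ ↦ hasDerivAt_halfLogSqDeriv 0)
      (isLittleO_halfLogSqDeriv_succ 0 (by norm_num)).isBigO a).trans_tendsto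
      ((tendsto_rpow_neg_atTop (by norm_num)).comp tendsto_natCast_atTop_atTop)
  induction M with
  | zero => simpa [psi1Approx, eulerMaclaurinSum, add_comm a] using hzero
  | succ M ih =>
    have hlast := (tendsto_halfLogSqDeriv_succ M).comp
      ((tendsto_const_add_cobounded a).comp tendsto_natCast_atTop_cobounded)
    simpa [psi1Approx, eulerMaclaurinSum_succ, add_sub_right_comm] using
      ih.add (hlast.const_smul ((bernoulli (M + 1) : ℝ) / (M + 1)!))

lemma halfLogSqDeriv_zero_natCast (n : ℕ) :
    halfLogSqDeriv 0 n = (Real.log n ^ 2 / 2 : ℝ) := by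
  simp [halfLogSqDeriv]

lemma sum_halfLogSqDeriv_one_natCast (n : ℕ) :
    ∑ j ∈ Finset.range n, halfLogSqDeriv 1 (1 + j) =
      (∑ j ∈ Finset.Icc 1 n, Real.log j / j : ℝ) := by
  induction n with
  | zero => simp
  | succ n ih =>
    rw [Finset.sum_range_succ, ih, Finset.sum_Icc_succ_top (by omega), halfLogSqDeriv_one,
      Complex.ofReal_add, Complex.ofReal_div, Complex.natCast_log, Complex.ofReal_natCast,
      Nat.cast_succ, add_comm (1 : ℂ)]

lemma tendsto_gamma1 :
    Tendsto (fun n : ℕ ↦ ∑ j ∈ Finset.Icc 1 n, Real.log j / j - Real.log n ^ 2 / 2)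
      atTop (𝓝 gamma1) := by
  have hsum : Summable fun j : ℕ ↦ psi1ApproxDefect 1 (1 + j) := by
    have hO : (fun j : ℕ ↦ psi1ApproxDefect 1 (1 + j)) =O[atTop]
        fun j : ℕ ↦ ‖(1 : ℂ) + j‖ ^ (-(3 / 2) : ℝ) :=
      (isBigO_psi1ApproxDefect one_ne_zero (by norm_num) (by norm_num) le_rfl
        Real.pi_pos).comp_tendsto tendsto_natCast_add_one_argSectorAtInfty
    have hnorm (j : ℕ) : ‖(1 : ℂ) + j‖ = ↑(j + 1) := by
      rw [add_comm, ← Nat.cast_succ, Complex.norm_natCast]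
    simp only [hnorm] at hO
    exact summable_of_isBigO_nat ((summable_nat_add_iff 1).mpr
      (Real.summable_nat_rpow.mpr (by norm_num))) hO
  have hlim := ((tendsto_psi1Approx_sub 1 1).sub hsum.hasSum.tendsto_sum_nat).sub_const
    (psi1Approx 1 1)
  refine tendsto_nhds_limUnder ⟨_, ((Complex.continuous_re.tendsto _).comp hlim).congr fun n ↦ ?_⟩
  rw [Function.comp_apply, sum_psi1ApproxDefect, sum_halfLogSqDeriv_one_natCast,
    halfLogSqDeriv_zero_natCast]
  rw [sub_sub_sub_comm, ← Complex.ofReal_re (_ - _)]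
  congr 1
  push_cast
  ring

lemma summable_halfLogSqDeriv_one_sub (z : ℂ) :
    Summable fun n : ℕ ↦ halfLogSqDeriv 1 (n + z) - halfLogSqDeriv 1 n :=
  summable_of_isBigO_nat (Real.summable_nat_rpow.mpr (by norm_num)) <|
    isBigO_sub_of_isBigO_hasDerivAt (r := 3 / 2) (by norm_num)
      (fun _ ↦ hasDerivAt_halfLogSqDeriv 1)
      (isLittleO_halfLogSqDeriv_succ 1 (by norm_num)).isBigO z

lemma tendsto_psi1 (z : ℂ) :
    Tendsto (fun n : ℕ ↦ halfLogSqDeriv 0 n -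
      ∑ j ∈ Finset.range (n + 1), halfLogSqDeriv 1 (z + j)) atTop (𝓝 (psi1 z)) := by
  have hsum := ((summable_nat_add_iff 1).mpr (summable_halfLogSqDeriv_one_sub z)).hasSum
  have hγ := ((Complex.continuous_ofReal.tendsto _).comp tendsto_gamma1)
  have hlim := (hγ.neg.sub_const (halfLogSqDeriv 1 z)).sub hsum.tendsto_sum_nat
  have hpsi1 : psi1 z = -gamma1 - halfLogSqDeriv 1 z -
      ∑' n : ℕ, (halfLogSqDeriv 1 (↑(n + 1) + z) - halfLogSqDeriv 1 ↑(n + 1)) := by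
    simp [psi1, halfLogSqDeriv_one]
  have hshift (j : ℕ) : z + ↑(j + 1) = ↑(j + 1) + z := add_comm _ _
  have hone (j : ℕ) : (1 : ℂ) + j = ↑(j + 1) := by rw [Nat.cast_succ, add_comm]
  rw [hpsi1]
  refine hlim.congr fun n ↦ ?_
  rw [Function.comp_apply, Complex.ofReal_sub, ← sum_halfLogSqDeriv_one_natCast,
    ← halfLogSqDeriv_zero_natCast, Finset.sum_range_succ', Finset.sum_sub_distrib]
  simp only [hshift, hone, Nat.cast_zero, add_zero]
  ring

lemma isBigO_psi1_sub_psi1Approx {M : ℕ} (hM : M ≠ 0) {r θ : ℝ} (hr : 1 < r) (hrM : r < M + 1)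
    (hθ0 : 0 ≤ θ) (hθ : θ < π) :
    (fun z ↦ psi1 z - psi1Approx M z) =O[argSectorAtInfty θ] fun z ↦ ‖z‖ ^ (1 - r) := by
  obtain ⟨C, hC, hdefect⟩ := exists_eventually_norm_add_ofReal_le hθ0 hθ (by linarith)
    (isBigO_psi1ApproxDefect hM (by linarith) hrM hθ0 hθ)
  refine .of_bound (C * (r / (r - 1))) ?_
  filter_upwards [hdefect, eventually_le_norm_argSectorAtInfty 1] with z hz hz1
  have hlim : Tendsto (fun n : ℕ ↦ ∑ j ∈ Finset.range (n + 1), psi1ApproxDefect M (z + j)) atTop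
      (𝓝 (psi1 z - psi1Approx M z)) := by
    have h := ((tendsto_psi1 z).sub_const (psi1Approx M z)).add (tendsto_psi1Approx_sub M (z + 1))
    rw [add_zero] at h
    refine h.congr fun n ↦ ?_
    rw [sum_psi1ApproxDefect, Nat.cast_succ, add_comm (n : ℂ), ← add_assoc]
    ring
  refine le_of_tendsto' hlim.norm fun n ↦ ?_
  rw [Real.norm_of_nonneg (by positivity), mul_assoc]
  calc ‖∑ j ∈ Finset.range (n + 1), psi1ApproxDefect M (z + j)‖
      ≤ ∑ j ∈ Finset.range (n + 1), C * (‖z‖ + j) ^ (-r) :=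
        norm_sum_le_of_le _ fun j _ ↦ by simpa using hz j j.cast_nonneg
    _ ≤ C * (r / (r - 1) * ‖z‖ ^ (1 - r)) := by
        rw [← Finset.mul_sum]
        gcongr
        exact sum_rpow_neg_le hz1 hr _

end Psi1

section Expansion

lemma bernoulli_smul_halfLogSqDeriv_two_mul (k : ℕ) (z : ℂ) :
    ((bernoulli (2 * k + 2) : ℝ) / (2 * k + 2)!) • halfLogSqDeriv (2 * k + 2) z =
      ((bernoulli (2 * (k + 1)) : ℂ) / (2 * ((k + 1 : ℕ) : ℂ) * z ^ (2 * (k + 1)))) *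
        ((∑ j ∈ Finset.Icc 1 (2 * (k + 1) - 2), 1 / (j : ℂ))
          + 1 / ((2 * (k + 1) - 1 : ℕ) : ℂ) - Complex.log z) := by
  have hharm : (harmonic (2 * k + 1) : ℂ) =
      (∑ j ∈ Finset.Icc 1 (2 * k), 1 / (j : ℂ)) + 1 / ((2 * k + 1 : ℕ) : ℂ) := by
    simp [harmonic_succ, harmonic_eq_sum_Icc]
  have hsign : (-1 : ℂ) ^ (2 * k + 1) = -1 := Odd.neg_one_pow ⟨k, rfl⟩
  have hfact : ((2 * k + 1)! : ℂ) ≠ 0 := mod_cast Nat.factorial_ne_zero _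
  have hk : (k : ℂ) + 1 ≠ 0 := mod_cast k.succ_ne_zero
  rw [show 2 * (k + 1) - 2 = 2 * k by omega, show 2 * (k + 1) - 1 = 2 * k + 1 by omega, ← hharm,
    halfLogSqDeriv, hsign, Complex.real_smul, Nat.factorial_succ (2 * k + 1)]
  push_cast
  rw [show 2 * (k + 1) = 2 * k + 1 + 1 by ring, show (2 * k + 1 + 1 : ℂ) = 2 * (k + 1) by ring]
  field_simp
  ring

lemma psi1Approx_two_mul_add_three (N : ℕ) (z : ℂ) :
    psi1Approx (2 * N + 3) z = psi1Approx (2 * N + 1) z +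
      ((bernoulli (2 * N + 2) : ℝ) / (2 * N + 2)!) • halfLogSqDeriv (2 * N + 2) z := by
  have hodd : bernoulli (2 * N + 3) = 0 := bernoulli_eq_zero_of_odd ⟨N + 1, by ring⟩ (by omega)
  simp [psi1Approx, eulerMaclaurinSum_succ, hodd]

lemma psi1Approx_two_mul_add_one (N : ℕ) (z : ℂ) :
    psi1Approx (2 * N + 1) z = (1/2) * Complex.log z ^ 2 - Complex.log z / (2 * z) +
      ∑ k ∈ Finset.Icc 1 N,
        ((bernoulli (2 * k) : ℂ) / (2 * (k : ℂ) * z ^ (2 * k))) *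
          ((∑ j ∈ Finset.Icc 1 (2 * k - 2), 1 / (j : ℂ))
            + 1 / ((2 * k - 1 : ℕ) : ℂ) - Complex.log z) := by
  induction N with
  | zero =>
    simp [psi1Approx, eulerMaclaurinSum, Finset.sum_range_succ, halfLogSqDeriv]
    ring
  | succ N ih =>
    rw [show 2 * (N + 1) + 1 = 2 * N + 3 by ring, psi1Approx_two_mul_add_three, ih,
      Finset.sum_Icc_succ_top (by omega), bernoulli_smul_halfLogSqDeriv_two_mul, add_assoc]

-- At order `2 N + 1` the bound for `psi1 - psi1Approx` loses more than one power of `z`; two orders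
-- further the loss is harmless and only the first omitted term remains.
lemma isBigO_psi1_sub_psi1Approx_two_mul_add_one (N : ℕ) {θ : ℝ} (hθ0 : 0 ≤ θ) (hθ : θ < π) :
    (fun z ↦ psi1 z - psi1Approx (2 * N + 1) z) =O[argSectorAtInfty θ]
      fun z ↦ Real.log ‖z‖ / ‖z‖ ^ (2 * N + 2) := by
  have hnext : (fun z ↦ psi1 z - psi1Approx (2 * N + 3) z) =O[argSectorAtInfty θ]
      fun z ↦ (1 : ℝ) * (‖z‖ ^ (2 * N + 2))⁻¹ := by
    refine (isBigO_psi1_sub_psi1Approx (M := 2 * N + 3) (r := 2 * N + 3) (by omega)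
      (by linarith [N.cast_nonneg (α := ℝ)]) (by push_cast; linarith) hθ0 hθ).congr_right fun z ↦ ?_
    rw [one_mul, ← Real.rpow_natCast, ← Real.rpow_neg (norm_nonneg z)]
    push_cast
    ring_nf
  have hlog : (fun z : ℂ ↦ (1 : ℝ) * (‖z‖ ^ (2 * N + 2))⁻¹) =O[argSectorAtInfty θ]
      fun z ↦ Real.log ‖z‖ / ‖z‖ ^ (2 * N + 2) :=
    (isBigO_one_log_norm.mono inf_le_left).mul (isBigO_refl _ _)
  have hterm := ((isBigO_halfLogSqDeriv_succ (2 * N + 1)).mono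
    (inf_le_left : argSectorAtInfty θ ≤ _)).const_smul_left
      ((bernoulli (2 * N + 2) : ℝ) / (2 * N + 2)!)
  refine ((hnext.trans hlog).add hterm).congr_left fun z ↦ ?_
  rw [psi1Approx_two_mul_add_three, Pi.smul_apply]
  ring

end Expansion

theorem stmt5 (N : ℕ) (hN : 1 ≤ N) (ε : ℝ) (hε : 0 < ε) (hε' : ε < Real.pi) :
    ∃ C > 0, ∃ R > 0, ∀ z : ℂ, R ≤ ‖z‖ → |Complex.arg z| ≤ Real.pi - ε →
      ‖psi1 z - (1/2) * (Complex.log z) ^ 2 + Complex.log z / (2 * z)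
        - ∑ k ∈ Finset.Icc 1 N,
            ((bernoulli (2 * k) : ℂ) / (2 * (k : ℂ) * z ^ (2 * k))) *
              ((∑ j ∈ Finset.Icc 1 (2 * k - 2), 1 / (j : ℂ))
                + 1 / ((2 * k - 1 : ℕ) : ℂ) - Complex.log z)‖
        ≤ C * (1 + Real.log ‖z‖) / ‖z‖ ^ (2 * N + 2) := by
  obtain ⟨C, hC, hbound⟩ := (isBigO_psi1_sub_psi1Approx_two_mul_add_one N
    (sub_nonneg.mpr hε'.le) (sub_lt_self π hε)).exists_pos
  obtain ⟨R, -, hR⟩ := (hasBasis_argSectorAtInfty (π - ε)).eventually_iff.mp hbound.bound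
  refine ⟨C, hC, max R 1, by positivity, fun z hz harg ↦ ?_⟩
  have hlog : 0 ≤ Real.log ‖z‖ := Real.log_nonneg ((le_max_right R 1).trans hz)
  have hzR := hR ⟨(le_max_left R 1).trans hz, harg⟩
  rw [psi1Approx_two_mul_add_one, Real.norm_of_nonneg (by positivity)] at hzR
  rw [sub_add, sub_sub, mul_div_assoc]
  refine hzR.trans ?_
  gcongr
  exact le_add_of_nonneg_left zero_le_one
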